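/- Under Assumptions A1 and A2, for every measurable g : X → ℝ with ‖ḡ‖_{V^{1/2}} < ∞ and every n ≥ 1, Var_π(S_n) ≤ 5·n·c^{1/2}·ρ^{−1/2}·(log(1/ρ))^{−1}·π(V)^{3/2}·‖ḡ‖_{V^{1/2}}². -/

import Mathlib

open MeasureTheory ProbabilityTheory Finset
open scoped ENNReal Classical

noncomputable section

/-- `n`-th iterate of a Markov kernel. -/
def kIter {Y : Type*} [MeasurableSpace Y] (Q : ProbabilityTheory.Kernel Y Y) :
    ℕ → ProbabilityTheory.Kernel Y Y
  | 0 => ProbabilityTheory.Kernel.id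
  | n + 1 => (kIter Q n).comp Q

/-- `U`-weighted total variation distance between two finite measures:
`∫ U d|μ - ν|`, via the Jordan decomposition of `μ - ν`. -/
def wTV {Y : Type*} [MeasurableSpace Y] (U : Y → ℝ) (μ ν : Measure Y) : ℝ :=
  (∫ x, U x ∂(μ - ν)) + ∫ x, U x ∂(ν - μ)

/-- `U`-weighted sup norm `‖g‖_U = sup_x |g x| / U x`. -/
def vnorm {Y : Type*} (U : Y → ℝ) (g : Y → ℝ) : ℝ := ⨆ x, |g x| / U x

/-- Membership in the class `L_U`: measurable with finite `U`-weighted sup norm. -/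
structure MemL {Y : Type*} [MeasurableSpace Y] (U : Y → ℝ) (g : Y → ℝ) : Prop where
  meas : Measurable g
  bdd : BddAbove (Set.range fun x => |g x| / U x)

/-- `(Xs n)` is a Markov chain with initial distribution `ξ` and Markov kernel `Q`:
the law of `Xs 0` is `ξ` and, conditionally on the past up to time `n`, the
distribution of `Xs (n+1)` is `Q (Xs n)`. -/
structure IsMarkovChain {X : Type*} [MeasurableSpace X] {Ω : Type*} [MeasurableSpace Ω]
    (P : Measure Ω) (Xs : ℕ → Ω → X) (ξ : Measure X)
    (Q : ProbabilityTheory.Kernel X X) : Prop where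
  meas : ∀ n, Measurable (Xs n)
  init : P.map (Xs 0) = ξ
  markov : ∀ (n : ℕ) (f : X → ℝ), Measurable f → (∀ x, |f x| ≤ 1) →
    (P[fun ω => f (Xs (n + 1) ω) |
        ⨆ i ∈ Finset.range (n + 1), MeasurableSpace.comap (Xs i) inferInstance])
      =ᵐ[P] fun ω => ∫ y, f y ∂(Q (Xs n ω))

/-- The combinatorial coefficient `B_γ(u,q)`. -/
def Bcoef (γ : ℝ) (u q : ℕ) : ℝ :=
  ((2 * q).factorial : ℝ) / (u.factorial : ℝ) *
    ∑ k ∈ Finset.univ.filter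
        (fun k : Fin u → Fin (2 * q + 1) =>
          (∀ i, 2 ≤ (k i : ℕ)) ∧ ∑ i, (k i : ℕ) = 2 * q),
      ∏ i, ((k i : ℕ).factorial : ℝ) ^ (γ + 2)

/-- The `2q`-th moment `(2q)!/(q! 2^q)` of the standard Gaussian. -/
def gaussMoment (q : ℕ) : ℝ := ((2 * q).factorial : ℝ) / ((q.factorial : ℝ) * 2 ^ q)

instance kIter_markov {Y : Type*} [MeasurableSpace Y] (Q : ProbabilityTheory.Kernel Y Y)
    [ProbabilityTheory.IsMarkovKernel Q] (k : ℕ) :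
    ProbabilityTheory.IsMarkovKernel (kIter Q k) := by
  induction k with
  | zero => unfold kIter; infer_instance
  | succ k ih => unfold kIter; infer_instance

lemma kIter_succ_comp {Y : Type*} [MeasurableSpace Y] (Q : ProbabilityTheory.Kernel Y Y) (k : ℕ) :
    kIter Q (k + 1) = Q.comp (kIter Q k) := by
  induction k with
  | zero => simp [kIter]
  | succ k ih =>
    rw [kIter, ih, Kernel.comp_assoc]
    rw [← ih]
    rfl

lemma measure_add_sub_comm {Y : Type*} [MeasurableSpace Y] (μ ν : Measure Y)
    [IsFiniteMeasure μ] [IsFiniteMeasure ν] : μ + (ν - μ) = ν + (μ - ν) := by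
  ext s hs
  have h := congrArg (fun v : SignedMeasure Y => v s)
    (Measure.sub_toSignedMeasure_eq_toSignedMeasure_sub (μ := μ) (ν := ν))
  simp only [Measure.toSignedMeasure_sub_apply hs] at h
  simp only [Measure.coe_add, Pi.add_apply]
  rw [← ENNReal.toReal_eq_toReal_iff' (by finiteness) (by finiteness),
    ENNReal.toReal_add (by finiteness) (by finiteness),
    ENNReal.toReal_add (by finiteness) (by finiteness)]
  simp only [measureReal_def] at h
  linarith

lemma test_bound {Y : Type*} [MeasurableSpace Y] (μ ν : Measure Y)
    [IsProbabilityMeasure μ] [IsProbabilityMeasure ν] (V h : Y → ℝ) (p q : ℝ)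
    (hq : 0 ≤ q) (hh : Measurable h)
    (hb : ∀ y, |h y| ≤ p * V y + q) (hμ : Integrable V μ) (hν : Integrable V ν) :
    |(∫ y, h y ∂μ) - ∫ y, h y ∂ν| ≤ p * wTV V μ ν + 2 * q := by
  have key : ∀ τ : Measure Y, IsFiniteMeasure τ → Integrable V τ → Integrable h τ := by
    intro τ _ hτ
    refine ((hτ.const_mul p).add (integrable_const q)).mono' hh.aestronglyMeasurable ?_
    exact ae_of_all _ hb
  have hV1 : Integrable V (μ - ν) := hμ.mono_measure Measure.sub_le
  have hV2 : Integrable V (ν - μ) := hν.mono_measure Measure.sub_le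
  have e := congrArg (fun τ => ∫ y, h y ∂τ) (measure_add_sub_comm μ ν)
  rw [integral_add_measure (key _ inferInstance hμ) (key _ inferInstance hV2),
    integral_add_measure (key _ inferInstance hν) (key _ inferInstance hV1)] at e
  have bd : ∀ τ σ : Measure Y, IsFiniteMeasure τ → IsProbabilityMeasure σ → τ ≤ σ →
      Integrable V τ → |∫ y, h y ∂τ| ≤ p * (∫ y, V y ∂τ) + q := by
    intro τ σ _ _ hle hτ
    have h1 : |∫ y, h y ∂τ| ≤ ∫ y, (p * V y + q) ∂τ :=
      norm_integral_le_of_norm_le (f := h) ((hτ.const_mul p).add (integrable_const q))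
        (ae_of_all _ hb)
    rw [integral_add (hτ.const_mul p) (integrable_const q), integral_const_mul,
      integral_const] at h1
    have h2 : τ.real Set.univ ≤ 1 := by
      have := ENNReal.toReal_mono (by simp) (hle Set.univ)
      simpa [measureReal_def] using this
    have h3 : τ.real Set.univ • q ≤ q := by
      simpa using mul_le_mul_of_nonneg_right h2 hq
    linarith
  have b1 := bd (μ - ν) μ inferInstance inferInstance Measure.sub_le hV1
  have b2 := bd (ν - μ) ν inferInstance inferInstance Measure.sub_le hV2
  have e' : (∫ y, h y ∂μ) - ∫ y, h y ∂ν = (∫ y, h y ∂(μ - ν)) - ∫ y, h y ∂(ν - μ) := by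
    linarith
  rw [e']
  have := abs_sub (∫ y, h y ∂(μ - ν)) (∫ y, h y ∂(ν - μ))
  unfold wTV
  linarith

lemma step_law {X : Type*} [MeasurableSpace X] {Ω : Type*} [mΩ : MeasurableSpace Ω]
    {P : Measure Ω} [IsProbabilityMeasure P] {Xs : ℕ → Ω → X} {ξ : Measure X}
    {Q : ProbabilityTheory.Kernel X X} [IsMarkovKernel Q]
    (hc : IsMarkovChain P Xs ξ Q) (i n : ℕ) (hin : i ≤ n)
    {A B : Set X} (hA : MeasurableSet A) (hB : MeasurableSet B) :
    P (Xs i ⁻¹' A ∩ Xs (n + 1) ⁻¹' B) = ∫⁻ ω in Xs i ⁻¹' A, Q (Xs n ω) B ∂P := by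
  have hm := hc.markov n (B.indicator fun _ => (1 : ℝ)) (measurable_const.indicator hB)
    (fun x => by by_cases hx : x ∈ B <;> simp [hx])
  have hle : (⨆ i ∈ Finset.range (n + 1), MeasurableSpace.comap (Xs i) inferInstance) ≤ mΩ := by
    refine iSup₂_le fun j _ => ?_
    exact (hc.meas j).comap_le
  have hAF : MeasurableSet[(⨆ i ∈ Finset.range (n + 1), MeasurableSpace.comap (Xs i) inferInstance)] (Xs i ⁻¹' A) := by
    have h1 : MeasurableSpace.comap (Xs i) inferInstance ≤
      (⨆ i ∈ Finset.range (n + 1), MeasurableSpace.comap (Xs i) inferInstance) :=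
      le_iSup₂_of_le (f := fun i (_ : i ∈ Finset.range (n + 1)) =>
        MeasurableSpace.comap (Xs i) inferInstance) i (by simp; omega) le_rfl
    exact h1 _ ⟨A, hA, rfl⟩
  have hA' : MeasurableSet (Xs i ⁻¹' A) := hc.meas i hA
  have hB' : MeasurableSet (Xs (n + 1) ⁻¹' B) := hc.meas (n + 1) hB
  have hcompeq : (fun ω => B.indicator (fun _ => (1 : ℝ)) (Xs (n + 1) ω)) =
      (Xs (n + 1) ⁻¹' B).indicator fun _ => (1 : ℝ) := by
    ext ω; simp [Set.indicator]
  have hint : Integrable (fun ω => B.indicator (fun _ => (1 : ℝ)) (Xs (n + 1) ω)) P := by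
    rw [hcompeq]
    exact (integrable_const _).indicator hB'
  have h2 := setIntegral_condExp hle hint hAF
  rw [setIntegral_congr_ae hA' (hm.mono fun x hx _ => hx)] at h2
  rw [hcompeq, setIntegral_indicator hB'] at h2
  simp only [integral_indicator hB, setIntegral_const, smul_eq_mul, mul_one] at h2
  have hmeasQ : Measurable fun ω => Q (Xs n ω) B :=
    (Kernel.measurable_coe Q hB).comp (hc.meas n)
  simp only [measureReal_def] at h2
  rw [integral_toReal hmeasQ.aemeasurable (ae_of_all _ fun ω => by finiteness)] at h2
  have hfin : ∫⁻ ω in Xs i ⁻¹' A, Q (Xs n ω) B ∂P ≠ ∞ := by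
    refine ne_top_of_le_ne_top ENNReal.one_ne_top ?_
    calc ∫⁻ ω in Xs i ⁻¹' A, Q (Xs n ω) B ∂P ≤ ∫⁻ ω in Xs i ⁻¹' A, 1 ∂P :=
          lintegral_mono fun ω => prob_le_one
      _ ≤ 1 := by simpa using prob_le_one
  exact ((ENNReal.toReal_eq_toReal_iff' hfin (by finiteness)).1 h2).symm

lemma joint_law {X : Type*} [MeasurableSpace X] {Ω : Type*} [MeasurableSpace Ω]
    {P : Measure Ω} [IsProbabilityMeasure P] {Xs : ℕ → Ω → X} {ξ : Measure X}
    {Q : ProbabilityTheory.Kernel X X} [IsMarkovKernel Q]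
    (hc : IsMarkovChain P Xs ξ Q) (i k : ℕ) :
    P.map (fun ω => (Xs i ω, Xs (i + k) ω)) = (P.map (Xs i)) ⊗ₘ (kIter Q k) := by
  have : IsProbabilityMeasure (P.map (Xs i)) :=
    Measure.isProbabilityMeasure_map (hc.meas i).aemeasurable
  induction k with
  | zero =>
    rw [kIter, Measure.compProd_id, Measure.map_map (by fun_prop) (hc.meas i)]
    rfl
  | succ k ih =>
    refine Measure.ext_prod fun {A B} hA hB => ?_
    have hmp : ∀ j, Measurable fun ω => (Xs i ω, Xs j ω) :=
      fun j => (hc.meas i).prodMk (hc.meas j)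
    rw [Measure.map_apply (hmp _) (hA.prod hB)]
    have h1 : (fun ω => (Xs i ω, Xs (i + (k + 1)) ω)) ⁻¹' (A ×ˢ B) =
        Xs i ⁻¹' A ∩ Xs (i + k + 1) ⁻¹' B := by
      ext ω; simp [Set.mem_prod, add_assoc]
    rw [h1, step_law hc i (i + k) (by omega) hA hB, Measure.compProd_apply_prod hA hB]
    have hQB : Measurable fun x => Q x B := Kernel.measurable_coe Q hB
    have h2 : ∫⁻ ω in Xs i ⁻¹' A, Q (Xs (i + k) ω) B ∂P =
        ∫⁻ z in A ×ˢ Set.univ, Q z.2 B ∂(P.map (fun ω => (Xs i ω, Xs (i + k) ω))) := by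
      rw [setLIntegral_map (f := fun z : X × X => Q z.2 B) (hA.prod MeasurableSet.univ)
        (hQB.comp measurable_snd) (hmp _)]
      congr 2
      ext ω; simp
    rw [h2, ih, Measure.setLIntegral_compProd (f := fun z : X × X => Q z.2 B) (hQB.comp measurable_snd) hA MeasurableSet.univ]
    refine lintegral_congr fun x => ?_
    rw [kIter_succ_comp, Kernel.comp_apply' _ _ _ hB, Measure.restrict_univ]

lemma inv_kIter {X : Type*} [MeasurableSpace X] {ξ : Measure X}
    {Q : ProbabilityTheory.Kernel X X} (hinv : ξ.bind (fun x => Q x) = ξ) (k : ℕ) :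
    ξ.bind (kIter Q k) = ξ := by
  induction k with
  | zero => rw [kIter]; simp
  | succ k ih =>
    rw [kIter_succ_comp, ← Measure.comp_assoc, ih]
    exact hinv

lemma marg_law {X : Type*} [MeasurableSpace X] {Ω : Type*} [MeasurableSpace Ω]
    {P : Measure Ω} [IsProbabilityMeasure P] {Xs : ℕ → Ω → X} {ξ : Measure X}
    [IsProbabilityMeasure ξ]
    {Q : ProbabilityTheory.Kernel X X} [IsMarkovKernel Q]
    (hc : IsMarkovChain P Xs ξ Q) (hinv : ξ.bind (fun x => Q x) = ξ) (k : ℕ) :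
    P.map (Xs k) = ξ := by
  have h := congrArg Measure.snd (joint_law hc 0 k)
  rw [hc.init, Measure.snd_compProd, inv_kIter hinv,
    Measure.snd_map_prodMk (hc.meas 0)] at h
  simpa using h

lemma sum_geo (r : ℝ) (h0 : 0 ≤ r) (h1 : r < 1) (n : ℕ) :
    ∑ j ∈ Finset.range n, r ^ (n - j) ≤ r / (1 - r) := by
  induction n with
  | zero => simp; exact div_nonneg h0 (by linarith)
  | succ n ih =>
    have : ∑ j ∈ Finset.range (n + 1), r ^ (n + 1 - j) =
        r * ∑ j ∈ Finset.range n, r ^ (n - j) + r := by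
      rw [Finset.sum_range_succ, Finset.mul_sum]
      congr 1
      · refine Finset.sum_congr rfl fun j hj => ?_
        have := Finset.mem_range.1 hj
        rw [← pow_succ', Nat.sub_add_comm this.le]
      · simp
    rw [this]
    have h2 := mul_le_mul_of_nonneg_left ih h0
    have h3 : r * (r / (1 - r)) + r = r / (1 - r) := by
      have : (1 : ℝ) - r ≠ 0 := by linarith
      field_simp; ring
    linarith

lemma cov_bound {X : Type*} [MeasurableSpace X] {Ω : Type*} [MeasurableSpace Ω]
    {P : Measure Ω} [IsProbabilityMeasure P] {Xs : ℕ → Ω → X} {ξ : Measure X}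
    [IsProbabilityMeasure ξ]
    {Q : ProbabilityTheory.Kernel X X} [IsMarkovKernel Q]
    (hchain : IsMarkovChain P Xs ξ Q) (hinv : ξ.bind (fun x => Q x) = ξ)
    (V h : X → ℝ) (hV : Measurable V) (hV1 : ∀ x, 0 < V x) (hpiV : Integrable V ξ)
    (c ρ : ℝ) (hc : 1 ≤ c) (hρ0 : 0 < ρ)
    (herg : ∀ ξ' : Measure X, IsProbabilityMeasure ξ' → Integrable V ξ' → ∀ k : ℕ,
      wTV V (ξ'.bind (fun x => (kIter Q k) x)) ξ ≤
        c * ((∫ x, V x ∂ξ') + ∫ x, V x ∂ξ) * ρ ^ k)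
    (hh : Measurable h) (M : ℝ) (hM : 0 ≤ M) (hb : ∀ x, |h x| ≤ M * √(V x))
    (hz : ∫ x, h x ∂ξ = 0) (i k : ℕ) :
    Integrable (fun ω => h (Xs i ω) * h (Xs (i + k) ω)) P ∧
    |∫ ω, h (Xs i ω) * h (Xs (i + k) ω) ∂P| ≤
      2 * √c * √ρ ^ k * (M ^ 2 * ∫ x, V x ∂ξ) := by
  have hVX : ∀ j, Integrable (fun ω => V (Xs j ω)) P := by
    intro j
    have := hpiV
    rw [← marg_law hchain hinv j] at this
    exact this.comp_measurable (hchain.meas j)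
  have hI : Integrable (fun ω => h (Xs i ω) * h (Xs (i + k) ω)) P := by
    refine (((hVX i).add (hVX (i + k))).const_mul (M ^ 2)).mono'
      (((hh.comp (hchain.meas i)).mul (hh.comp (hchain.meas (i + k)))).aestronglyMeasurable) ?_
    refine ae_of_all _ fun ω => ?_
    rw [Real.norm_eq_abs, abs_mul]
    have h1 := hb (Xs i ω)
    have h2 := hb (Xs (i + k) ω)
    have e1 := Real.sq_sqrt (hV1 (Xs i ω)).le
    have e2 := Real.sq_sqrt (hV1 (Xs (i + k) ω)).le
    simp only [Pi.add_apply]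
    calc _ ≤ (M * √(V (Xs i ω))) * (M * √(V (Xs (i + k) ω))) :=
          mul_le_mul h1 h2 (abs_nonneg _) (by positivity)
      _ = M ^ 2 * (√(V (Xs i ω)) * √(V (Xs (i + k) ω))) := by ring
      _ ≤ _ := by
        refine mul_le_mul_of_nonneg_left ?_ (sq_nonneg M)
        nlinarith [sq_nonneg (√(V (Xs i ω)) - √(V (Xs (i + k) ω))),
          hV1 (Xs i ω), hV1 (Xs (i + k) ω)]
  refine ⟨hI, ?_⟩
  have hmp : Measurable fun ω => (Xs i ω, Xs (i + k) ω) :=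
    (hchain.meas i).prodMk (hchain.meas _)
  have hφ : Measurable fun z : X × X => h z.1 * h z.2 := by fun_prop
  have hlaw := joint_law hchain i k
  rw [marg_law hchain hinv i] at hlaw
  have hI2 : Integrable (fun z : X × X => h z.1 * h z.2) (ξ ⊗ₘ kIter Q k) := by
    rw [← hlaw, integrable_map_measure hφ.aestronglyMeasurable hmp.aemeasurable]
    exact hI
  have e1 : ∫ ω, h (Xs i ω) * h (Xs (i + k) ω) ∂P =
      ∫ x, ∫ y, h x * h y ∂(kIter Q k x) ∂ξ := by
    rw [← Measure.integral_compProd hI2, ← hlaw,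
      integral_map hmp.aemeasurable hφ.aestronglyMeasurable]
  rw [e1]
  have hae : ∀ᵐ x ∂ξ, Integrable V (kIter Q k x) := by
    have h0 := hpiV
    rw [← inv_kIter hinv k] at h0
    exact ((Measure.integrable_comp_iff h0.aestronglyMeasurable).1 h0).1
  have hpt : ∀ᵐ x ∂ξ, ‖∫ y, h x * h y ∂(kIter Q k x)‖ ≤
      M ^ 2 * √c * √ρ ^ k * ((V x + ∫ x, V x ∂ξ) / 2 + V x) := by
    filter_upwards [hae] with x hx
    rw [integral_const_mul, Real.norm_eq_abs, abs_mul]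
    have hw : 0 < √(V x) := Real.sqrt_pos.2 (hV1 x)
    have hs : 0 < √c := Real.sqrt_pos.2 (by linarith)
    have hR : 0 < √ρ ^ k := pow_pos (Real.sqrt_pos.2 hρ0) k
    have hw2 := Real.sq_sqrt (hV1 x).le
    have hs2 := Real.sq_sqrt (show 0 ≤ c by linarith)
    have hR2 : (√ρ ^ k) ^ 2 = ρ ^ k := by
      rw [← pow_mul, mul_comm, pow_mul, Real.sq_sqrt hρ0.le]
    have hx1 := hb x
    have hW := herg (Measure.dirac x) inferInstance
      (integrable_dirac' hV.stronglyMeasurable (by simp)) k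
    rw [Measure.dirac_bind (kIter Q k).measurable, integral_dirac' _ _ hV.stronglyMeasurable] at hW
    rw [← hR2, ← hs2] at hW
    generalize √(V x) = w at *
    generalize √c = s at *
    generalize √ρ ^ k = R at *
    set t : ℝ := (s * w * R)⁻¹ with ht
    have htp : 0 < t := by positivity
    have hT := test_bound (kIter Q k x) ξ V h (M * t / 2) (M * (t⁻¹ / 2)) (by positivity) hh
      (fun y => by
        refine (hb y).trans ?_
        have hy2 := Real.sq_sqrt (hV1 y).le
        have : √(V y) ≤ t / 2 * V y + t⁻¹ / 2 := by
          rw [← sub_nonneg]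
          have : t / 2 * V y + t⁻¹ / 2 - √(V y) = t / 2 * (√(V y) - t⁻¹) ^ 2 := by
            nth_rewrite 1 [← hy2]
            field_simp
            ring
          rw [this]; positivity
        calc M * √(V y) ≤ M * (t / 2 * V y + t⁻¹ / 2) := mul_le_mul_of_nonneg_left this hM
          _ = _ := by ring) hx hpiV
    rw [hz, sub_zero] at hT
    have hT2 : |∫ y, h y ∂(kIter Q k x)| ≤
        M * t / 2 * (s ^ 2 * (V x + ∫ x, V x ∂ξ) * R ^ 2) + 2 * (M * (t⁻¹ / 2)) := by
      refine hT.trans ?_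
      have := mul_le_mul_of_nonneg_left hW (show 0 ≤ M * t / 2 by positivity)
      linarith
    calc |h x| * |∫ y, h y ∂(kIter Q k x)| ≤ (M * w) *
        (M * t / 2 * (s ^ 2 * (V x + ∫ x, V x ∂ξ) * R ^ 2) + 2 * (M * (t⁻¹ / 2))) :=
          mul_le_mul hx1 hT2 (abs_nonneg _) (by positivity)
      _ = M ^ 2 * s * R * ((V x + ∫ x, V x ∂ξ) / 2 + w ^ 2) := by
          rw [ht]; field_simp
      _ = _ := by rw [hw2]
  have hi0 : Integrable (fun x => (V x + ∫ x, V x ∂ξ) / 2) ξ :=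
    (hpiV.add (integrable_const _)).div_const 2
  have hi1 : Integrable (fun x => (V x + ∫ x, V x ∂ξ) / 2 + V x) ξ :=
    hi0.add hpiV
  have hfin := norm_integral_le_of_norm_le (hi1.const_mul (M ^ 2 * √c * √ρ ^ k)) hpt
  rw [integral_const_mul, integral_add hi0 hpiV,
    integral_div, integral_add hpiV (integrable_const _)] at hfin
  simp only [integral_const, probReal_univ, one_smul, Real.norm_eq_abs] at hfin
  refine hfin.trans (le_of_eq ?_)
  ring

lemma final_num (n C πV c ρ : ℝ) (hn : 0 ≤ n) (hC : 0 ≤ C) (hπ : Real.exp 1 ≤ πV)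
    (hc : 1 ≤ c) (hρ0 : 0 < ρ) (hρ1 : ρ < 1) :
    n * ((C * πV) * (1 + 4 * √c * (√ρ / (1 - √ρ)))) ≤
      5 * n * c ^ ((1 : ℝ) / 2) * ρ ^ (-(1 : ℝ) / 2) * (Real.log (1 / ρ))⁻¹ *
        πV ^ ((3 : ℝ) / 2) * C := by
  have hπ0 : 0 < πV := (Real.exp_pos 1).trans_le hπ
  have hπ2 : (8 : ℝ) / 5 ≤ √πV := by
    refine Real.le_sqrt_of_sq_le ?_
    have := Real.exp_one_gt_d9
    norm_num; linarith
  have e1 : πV ^ ((3 : ℝ) / 2) = πV * √πV := by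
    rw [Real.sqrt_eq_rpow, ← Real.rpow_one_add' hπ0.le (by norm_num)]; norm_num
  have e2 : ρ ^ (-(1 : ℝ) / 2) = (√ρ)⁻¹ := by
    rw [Real.sqrt_eq_rpow, ← Real.rpow_neg hρ0.le]; norm_num
  rw [e1, e2, ← Real.sqrt_eq_rpow]
  have hs : 1 ≤ √c := Real.one_le_sqrt.2 hc
  have hr0 : 0 < √ρ := Real.sqrt_pos.2 hρ0
  have hr1 : √ρ < 1 := by rw [Real.sqrt_lt' one_pos]; simpa using hρ1
  have hlog : Real.log (1 / ρ) ≤ 2 * ((1 - √ρ) / √ρ) := by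
    have h1 : Real.log (1 / ρ) = 2 * Real.log (√ρ)⁻¹ := by
      rw [one_div, Real.log_inv, Real.log_inv, Real.log_sqrt hρ0.le]; ring
    have h2 := Real.log_le_sub_one_of_pos (inv_pos.2 hr0)
    have h3 : (√ρ)⁻¹ - 1 = (1 - √ρ) / √ρ := by field_simp
    rw [h1]; linarith
  have hlogp : 0 < Real.log (1 / ρ) := Real.log_pos (by rw [lt_div_iff₀ hρ0]; linarith)
  have hli : √ρ / (2 * (1 - √ρ)) ≤ (Real.log (1 / ρ))⁻¹ := by
    have := inv_anti₀ hlogp hlog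
    refine le_trans (le_of_eq ?_) this
    field_simp
  generalize √ρ = r at *
  generalize √c = s at *
  generalize √πV = p at *
  generalize (Real.log (1 / ρ))⁻¹ = L at *
  have h1r : 0 < 1 - r := by linarith
  have hA : 1 + 4 * s * (r / (1 - r)) ≤ 4 * s / (1 - r) := by
    rw [← mul_div_assoc, le_div_iff₀ h1r]
    field_simp
    nlinarith
  have hB : 4 * s / (1 - r) ≤ 5 * s * r⁻¹ * L * p := by
    have h1 : (r / (2 * (1 - r))) * (8 / 5) ≤ L * p :=
      mul_le_mul hli hπ2 (by norm_num) (le_trans (by positivity) hli)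
    have h2 := mul_le_mul_of_nonneg_left h1 (show 0 ≤ 5 * s * r⁻¹ by positivity)
    have h3 : 5 * s * r⁻¹ * ((r / (2 * (1 - r))) * (8 / 5)) = 4 * s / (1 - r) := by
      field_simp; ring
    rw [h3] at h2
    linarith
  calc _ ≤ n * ((C * πV) * (5 * s * r⁻¹ * L * p)) := by
        refine mul_le_mul_of_nonneg_left ?_ hn
        exact mul_le_mul_of_nonneg_left (hA.trans hB) (by positivity)
    _ = _ := by ring

/-- Variance bound for the stationary chain:
`Var_π(S_n) ≤ 5 n c^{1/2} ρ^{-1/2} (log(1/ρ))⁻¹ π(V)^{3/2} ‖ḡ‖_{V^{1/2}}²`. -/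
theorem variance_bound
    {X : Type*} [MeasurableSpace X]
    (Q : ProbabilityTheory.Kernel X X) [ProbabilityTheory.IsMarkovKernel Q]
    (V : X → ℝ) (lam b : ℝ) (m : ℕ) (eps d c ρ : ℝ) (piQ : Measure X)
    [IsProbabilityMeasure piQ]
    -- Assumption A1
    (hV : Measurable V) (hVe : ∀ x, Real.exp 1 ≤ V x)
    (hlam0 : 0 < lam) (hlam1 : lam < 1) (hb : 0 ≤ b)
    (hdrift : ∀ x, ∫ y, V y ∂(Q x) ≤ lam * V x + b)
    -- Assumption A2
    (hm : 1 ≤ m) (heps0 : 0 < eps) (heps1 : eps < 1) (hd : 0 ≤ d)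
    (hsmallcond : lam + 2 * b / (1 + d) < 1)
    (hsmall : ∃ ν : Measure X, IsProbabilityMeasure ν ∧
      ∀ x, V x ≤ d → ∀ A : Set X, MeasurableSet A →
        ENNReal.ofReal eps * ν A ≤ (kIter Q m) x A)
    -- piQ is the unique invariant probability measure, with piQ(V) < ∞
    (hinv : piQ.bind (fun x => Q x) = piQ)
    (huniq : ∀ π' : Measure X, IsProbabilityMeasure π' →
      π'.bind (fun x => Q x) = π' → π' = piQ)
    (hpiV : Integrable V piQ)
    -- geometric ergodicity constants c ≥ 1, ρ ∈ (0,1)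
    (hc : 1 ≤ c) (hρ0 : 0 < ρ) (hρ1 : ρ < 1)
    (herg : ∀ ξ : Measure X, IsProbabilityMeasure ξ → Integrable V ξ → ∀ k : ℕ,
      wTV V (ξ.bind (fun x => (kIter Q k) x)) piQ ≤
        c * ((∫ x, V x ∂ξ) + ∫ x, V x ∂piQ) * ρ ^ k)
    -- the function g, measurable with finite `V^{1/2}`-weighted norm of ḡ
    (g : X → ℝ) (hgmeas : Measurable g)
    (hgbdd : BddAbove (Set.range fun x =>
      |g x - ∫ y, g y ∂piQ| / V x ^ ((1 : ℝ) / 2)))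
    (n : ℕ) (hn : 1 ≤ n)
    -- the stationary canonical chain
    {Ω : Type*} [MeasurableSpace Ω] (P : Measure Ω) [IsProbabilityMeasure P]
    (Xs : ℕ → Ω → X) (hchain : IsMarkovChain P Xs piQ Q) :
    (∫ ω, (∑ ℓ ∈ Finset.range n, (g (Xs ℓ ω) - ∫ x, g x ∂piQ)) ^ 2 ∂P) ≤
      5 * (n : ℝ) * c ^ ((1 : ℝ) / 2) * ρ ^ (-(1 : ℝ) / 2) * (Real.log (1 / ρ))⁻¹ *
        (∫ x, V x ∂piQ) ^ ((3 : ℝ) / 2) *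
        vnorm (fun x => V x ^ ((1 : ℝ) / 2)) (fun x => g x - ∫ y, g y ∂piQ) ^ 2 := by
  set h : X → ℝ := fun x => g x - ∫ y, g y ∂piQ with hh
  set M : ℝ := vnorm (fun x => V x ^ ((1 : ℝ) / 2)) h with hM
  have hV0 : ∀ x, 0 < V x := fun x => (Real.exp_pos 1).trans_le (hVe x)
  have hhm : Measurable h := hgmeas.sub_const _
  have hM0 : 0 ≤ M := by
    refine Real.iSup_nonneg fun x => ?_
    have := hV0 x
    positivity
  have hb : ∀ x, |h x| ≤ M * √(V x) := by
    intro x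
    have h1 : |h x| / V x ^ ((1 : ℝ) / 2) ≤ M := le_ciSup hgbdd x
    rw [← Real.sqrt_eq_rpow] at h1
    exact (div_le_iff₀ (Real.sqrt_pos.2 (hV0 x))).1 h1
  have hV1 : ∀ x, 1 ≤ V x := fun x => (Real.one_le_exp zero_le_one).trans (hVe x)
  have hint : Integrable h piQ := by
    refine (hpiV.const_mul M).mono' hhm.aestronglyMeasurable (ae_of_all _ fun x => ?_)
    refine (hb x).trans (mul_le_mul_of_nonneg_left ?_ hM0)
    rw [Real.sqrt_le_left (hV0 x).le]
    nlinarith [hV1 x]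
  have hgint : Integrable g piQ := by
    have := hint.add (integrable_const (∫ y, g y ∂piQ))
    refine this.congr (ae_of_all _ fun x => ?_)
    simp [hh]
  have hz : ∫ x, h x ∂piQ = 0 := by
    rw [hh, integral_sub hgint (integrable_const _)]
    simp
  have hcov := cov_bound hchain hinv V h hV hV0 hpiV c ρ hc hρ0 herg hhm M hM0 hb hz
  have hdiag : ∀ i, ∫ ω, h (Xs i ω) ^ 2 ∂P ≤ M ^ 2 * ∫ x, V x ∂piQ := by
    intro i
    have e : ∫ ω, h (Xs i ω) ^ 2 ∂P = ∫ x, h x ^ 2 ∂piQ := by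
      rw [← marg_law hchain hinv i,
        integral_map (hchain.meas i).aemeasurable (hhm.pow_const 2).aestronglyMeasurable]
    rw [e, ← integral_const_mul]
    refine integral_mono_of_nonneg (ae_of_all _ fun x => sq_nonneg _) (hpiV.const_mul _)
      (ae_of_all _ fun x => ?_)
    have h1 := pow_le_pow_left₀ (abs_nonneg _) (hb x) 2
    rw [sq_abs, mul_pow, Real.sq_sqrt (hV0 x).le] at h1
    exact h1
  have hprod : ∀ i j, Integrable (fun ω => h (Xs i ω) * h (Xs j ω)) P := by
    intro i j
    rcases le_total i j with hij | hij
    · obtain ⟨k, rfl⟩ := Nat.exists_eq_add_of_le hij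
      exact (hcov i k).1
    · obtain ⟨k, rfl⟩ := Nat.exists_eq_add_of_le hij
      refine ((hcov j k).1).congr (ae_of_all _ fun ω => mul_comm _ _)
  have hr0 : 0 ≤ √ρ := Real.sqrt_nonneg _
  have hr1 : √ρ < 1 := by rw [Real.sqrt_lt' one_pos]; simpa using hρ1
  have hπe : Real.exp 1 ≤ ∫ x, V x ∂piQ := by
    have := integral_mono (integrable_const (Real.exp 1)) hpiV hVe
    simpa using this
  have hC0 : 0 ≤ M ^ 2 * ∫ x, V x ∂piQ :=
    mul_nonneg (sq_nonneg M) ((Real.exp_pos 1).le.trans hπe)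
  have hmain : ∀ N : ℕ, ∫ ω, (∑ ℓ ∈ Finset.range N, h (Xs ℓ ω)) ^ 2 ∂P ≤
      N * ((M ^ 2 * ∫ x, V x ∂piQ) * (1 + 4 * √c * (√ρ / (1 - √ρ)))) := by
    intro N
    induction N with
    | zero => simp
    | succ N ih =>
      have hS2 : Integrable (fun ω => (∑ ℓ ∈ Finset.range N, h (Xs ℓ ω)) ^ 2) P := by
        simp only [sq, Finset.sum_mul_sum]
        exact integrable_finsetSum _ fun i _ => integrable_finsetSum _ fun j _ => hprod i j
      have hcr : Integrable (fun ω => ∑ ℓ ∈ Finset.range N, h (Xs ℓ ω) * h (Xs N ω)) P :=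
        integrable_finsetSum _ fun i _ => hprod i N
      have hsq : Integrable (fun ω => h (Xs N ω) ^ 2) P := by
        simpa only [sq] using hprod N N
      have hsc : Integrable (fun ω => (∑ ℓ ∈ Finset.range N, h (Xs ℓ ω)) ^ 2 +
          2 * ∑ ℓ ∈ Finset.range N, h (Xs ℓ ω) * h (Xs N ω)) P := hS2.add (hcr.const_mul 2)
      have e : ∫ ω, (∑ ℓ ∈ Finset.range (N + 1), h (Xs ℓ ω)) ^ 2 ∂P =
          ∫ ω, (∑ ℓ ∈ Finset.range N, h (Xs ℓ ω)) ^ 2 ∂P +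
            2 * (∑ ℓ ∈ Finset.range N, ∫ ω, h (Xs ℓ ω) * h (Xs N ω) ∂P) +
            ∫ ω, h (Xs N ω) ^ 2 ∂P := by
        rw [← integral_finsetSum _ fun i _ => hprod i N, ← integral_const_mul,
          ← integral_add hS2 (hcr.const_mul 2), ← integral_add hsc hsq]
        refine integral_congr_ae (ae_of_all _ fun ω => ?_)
        simp only [Finset.sum_range_succ, ← Finset.sum_mul, Pi.add_apply]
        ring
      have hcs : ∑ ℓ ∈ Finset.range N, ∫ ω, h (Xs ℓ ω) * h (Xs N ω) ∂P ≤
          2 * √c * (M ^ 2 * ∫ x, V x ∂piQ) * (√ρ / (1 - √ρ)) := by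
        calc _ ≤ ∑ ℓ ∈ Finset.range N,
              2 * √c * (M ^ 2 * ∫ x, V x ∂piQ) * √ρ ^ (N - ℓ) := by
              refine Finset.sum_le_sum fun j hj => ?_
              have hjN := (Finset.mem_range.1 hj).le
              have h1 := (le_abs_self _).trans (hcov j (N - j)).2
              rw [Nat.add_sub_cancel' hjN] at h1
              refine h1.trans (le_of_eq ?_)
              ring
          _ ≤ _ := by
              rw [← Finset.mul_sum]
              exact mul_le_mul_of_nonneg_left (sum_geo _ hr0 hr1 N)
                (mul_nonneg (by positivity) hC0)
      rw [e]
      have := hdiag N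
      push_cast
      linarith
  refine (hmain n).trans ?_
  exact final_num n (M ^ 2) (∫ x, V x ∂piQ) c ρ (Nat.cast_nonneg n) (sq_nonneg M) hπe hc hρ0 hρ1
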